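/- Fenchel duality for integrally convex and separable concave functions: let f: ℤⁿ → ℤ ∪ {+∞} be an integer-valued integrally convex function with dom f ≠ ∅ and Ψ: ℤⁿ → ℤ ∪ {-∞} an integer-valued separable concave function (Ψ(x) = Σᵢ ψᵢ(xᵢ) with univariate discrete concave ψᵢ) with dom Ψ ≠ ∅. If min{f(x) - Ψ(x) : x ∈ ℤⁿ} or max{Ψ°(p) - f•(p) : p ∈ ℤⁿ} is finite, then min{f(x) - Ψ(x) : x ∈ ℤⁿ} = max{Ψ°(p) - f•(p) : p ∈ ℤⁿ}. -/

import Mathlib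

open scoped BigOperators

/-- The integral neighborhood N(u) = {z ∈ ℤⁿ : |uᵢ − zᵢ| < 1 for all i}. -/
def intNbhd {n : ℕ} (u : Fin n → ℝ) : Set (Fin n → ℤ) :=
  {z | ∀ i, |u i - (z i : ℝ)| < 1}

/-- The local convex extension f̃(u): the infimum of convex combinations
Σ λ_z f(z) over points z of the integral neighborhood N(u) whose convex
combination with the weights λ equals u.  (It is +∞ when no such
combination exists.) -/
noncomputable def localConvexExt {n : ℕ} (f : (Fin n → ℤ) → EReal)
    (u : Fin n → ℝ) : EReal :=
  sInf { v : EReal | ∃ (t : Finset (Fin n → ℤ)) (lam : (Fin n → ℤ) → ℝ),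
    (∀ z ∈ t, z ∈ intNbhd u) ∧ (∀ z ∈ t, 0 ≤ lam z) ∧
    (∑ z ∈ t, lam z) = 1 ∧
    (∀ i, (∑ z ∈ t, lam z * (z i : ℝ)) = u i) ∧
    v = ∑ z ∈ t, (((lam z : ℝ) : EReal) * f z) }

/-- A function f : ℤⁿ → ℝ ∪ {+∞} with nonempty effective domain is
*integrally convex* if its local convex extension satisfies the midpoint
inequality f̃((x+y)/2) ≤ (f(x)+f(y))/2 for all x, y ∈ ℤⁿ with
‖x − y‖∞ ≥ 2 (this is equivalent to convexity of f̃ on ℝⁿ). -/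
def IntegrallyConvexFn {n : ℕ} (f : (Fin n → ℤ) → EReal) : Prop :=
  (∃ x, f x ≠ ⊤) ∧
  ∀ x y : Fin n → ℤ, (∃ i, 2 ≤ |x i - y i|) →
    localConvexExt f (fun i => ((x i + y i : ℤ) : ℝ) / 2) ≤ (f x + f y) / 2

/-!
Tested against affine functions, integral convexity says that an affine minorant of `f` near the
midpoint of `x` and `y` lies below `(f x + f y) / 2` there. In this form it is inherited
when a summand `-ψᵢ` of `-Ψ` is added to `f` and the `i`-th coordinate is then ignored, because that
summand is affine near the midpoint. A subgradient of `f` at a minimizer of `f - Ψ` that is also a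
supergradient of `Ψ` is therefore built one coordinate at a time. On the unit box around the
minimizer, each new component only has to satisfy inequalities with coefficients `0` and `±1`, hence
can be chosen integral; the midpoint inequality then extends the subgradient inequality from the box
to all of `ℤⁿ`. If the effective domains are disjoint, the same construction with a multiple of the
distance to `dom Ψ` in place of `-Ψ` shows that the dual is either infeasible or unbounded.
-/

section DiscreteConvex

variable {R : Type*} [CommRing R] [LinearOrder R] {D : Set ℤ} {φ : ℤ → R}

/-- Discrete convexity of a univariate function with effective domain `D`; the values of `φ`
outside `D` are irrelevant. -/
structure DiscreteConvexOn (D : Set ℤ) (φ : ℤ → R) : Prop where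
  ordConnected : D.OrdConnected
  two_mul_le : ∀ k, k - 1 ∈ D → k + 1 ∈ D → 2 * φ k ≤ φ (k - 1) + φ (k + 1)

namespace DiscreteConvexOn

theorem comp_neg (hφ : DiscreteConvexOn D φ) :
    DiscreteConvexOn (Neg.neg ⁻¹' D) (fun k => φ (-k)) where
  ordConnected := hφ.ordConnected.preimage_anti fun _ _ => neg_le_neg
  two_mul_le k hk hk' := by
    have hsub : -(k - 1) = -k + 1 := by ring
    have hadd : -(k + 1) = -k - 1 := by ring
    rw [Set.mem_preimage, hsub] at hk
    rw [Set.mem_preimage, hadd] at hk'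
    rw [hsub, hadd, add_comm]
    exact hφ.two_mul_le (-k) hk' hk

variable [IsStrictOrderedRing R]

theorem add_mul (hφ : DiscreteConvexOn D φ) (a : R) :
    DiscreteConvexOn D (fun k => φ k + a * k) where
  ordConnected := hφ.ordConnected
  two_mul_le k hk hk' := by
    have := hφ.two_mul_le k hk hk'
    push_cast
    linarith

theorem const_mul (hφ : DiscreteConvexOn D φ) {a : R} (ha : 0 ≤ a) :
    DiscreteConvexOn D (fun k => a * φ k) where
  ordConnected := hφ.ordConnected
  two_mul_le k hk hk' := by
    linarith [mul_le_mul_of_nonneg_left (hφ.two_mul_le k hk hk') ha]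

theorem monotoneOn_Ici (hφ : DiscreteConvexOn D φ) {c : ℤ} (hc : c ∈ D)
    (hstep : c + 1 ∈ D → φ c ≤ φ (c + 1)) : MonotoneOn φ (D ∩ Set.Ici c) := by
  have hsteps : ∀ t, c ≤ t → t + 1 ∈ D → φ t ≤ φ (t + 1) := by
    intro t hct
    induction t, hct using Int.leInduction with
    | base => exact hstep
    | succ t hct ih =>
      intro ht
      have hmid := ih (hφ.ordConnected.out hc ht ⟨by omega, by omega⟩)
      have hconv := hφ.two_mul_le (t + 1)
        (hφ.ordConnected.out hc ht ⟨by omega, by omega⟩) ht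
      rw [add_sub_cancel_right] at hconv
      linarith
  exact monotoneOn_of_le_add_one (hφ.ordConnected.inter Set.ordConnected_Ici)
    fun t _ ht ht' => hsteps t ht.2 ht'.1

theorem le_of_forall_abs_sub_le_one (hφ : DiscreteConvexOn D φ) {c t : ℤ} (hc : c ∈ D)
    (hloc : ∀ u ∈ D, |u - c| ≤ 1 → φ c ≤ φ u) (ht : t ∈ D) : φ c ≤ φ t := by
  rcases le_total c t with hct | htc
  · exact hφ.monotoneOn_Ici hc (fun h => hloc _ h (by simp)) ⟨hc, Set.self_mem_Ici⟩ ⟨ht, hct⟩ hct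
  · have hmono := hφ.comp_neg.monotoneOn_Ici (c := -c) (by simpa using hc)
      fun h => by simpa using hloc _ h (by simp)
    simpa using hmono ⟨by simpa using hc, Set.self_mem_Ici⟩ ⟨by simpa using ht, neg_le_neg htc⟩
      (neg_le_neg htc)

theorem add_mul_sub_le_of_forall_abs_sub_le_one (hφ : DiscreteConvexOn D φ) {c t : ℤ} {a : R}
    (hc : c ∈ D) (hloc : ∀ u ∈ D, |u - c| ≤ 1 → φ c + a * (u - c) ≤ φ u) (ht : t ∈ D) :
    φ c + a * (t - c) ≤ φ t := by
  have := (hφ.add_mul (-a)).le_of_forall_abs_sub_le_one hc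
    (fun u hu huc => by linarith [hloc u hu huc]) ht
  linarith

theorem add_slope_mul_sub_le (hφ : DiscreteConvexOn D φ) {m t : ℤ} (hm : m ∈ D) (hm' : m + 1 ∈ D)
    (ht : t ∈ D) : φ m + (φ (m + 1) - φ m) * (t - m) ≤ φ t := by
  refine hφ.add_mul_sub_le_of_forall_abs_sub_le_one hm (fun u hu hum => ?_) ht
  obtain rfl | rfl | rfl : u = m - 1 ∨ u = m ∨ u = m + 1 := by rw [abs_le] at hum; omega
  · have := hφ.two_mul_le m hu hm'
    push_cast
    linarith
  · simp
  · simp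

theorem exists_affine_near_midpoint (hφ : DiscreteConvexOn D φ) {a b : ℤ} (ha : a ∈ D)
    (hb : b ∈ D) :
    ∃ σ τ : R, (∀ t : ℤ, |a + b - 2 * t| ≤ 1 → t ∈ D ∧ φ t = σ * t + τ) ∧
      σ * (a + b) + 2 * τ ≤ φ a + φ b := by
  wlog hab : a ≤ b generalizing a b
  · simpa only [add_comm] using this hb ha (le_of_not_ge hab)
  obtain rfl | hlt := hab.eq_or_lt
  · refine ⟨0, φ a, fun t ht => ?_, by linarith⟩
    obtain rfl : t = a := by rw [abs_le] at ht; omega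
    simpa using ha
  · set m := (a + b) / 2
    have hm : m ∈ D := hφ.ordConnected.out ha hb ⟨by omega, by omega⟩
    have hm' : m + 1 ∈ D := hφ.ordConnected.out ha hb ⟨by omega, by omega⟩
    refine ⟨φ (m + 1) - φ m, φ m - (φ (m + 1) - φ m) * m, fun t ht => ?_, ?_⟩
    · obtain rfl | rfl : t = m ∨ t = m + 1 := by rw [abs_le] at ht; omega
      · exact ⟨hm, by ring⟩
      · exact ⟨hm', by push_cast; ring⟩
    · linarith [hφ.add_slope_mul_sub_le hm hm' ha, hφ.add_slope_mul_sub_le hm hm' hb]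

theorem two_mul_le_of_add_eq (hφ : DiscreteConvexOn D φ) {a b m : ℤ} (ha : a ∈ D) (hb : b ∈ D)
    (hm : a + b = 2 * m) : 2 * φ m ≤ φ a + φ b := by
  obtain ⟨σ, τ, hnear, hmid⟩ := hφ.exists_affine_near_midpoint ha hb
  have hab : (a + b : R) = 2 * m := by exact_mod_cast hm
  rw [hab] at hmid
  rw [(hnear m (by simp [hm])).2]
  linarith

end DiscreteConvexOn

end DiscreteConvex

theorem sum_insert_update_mul {ι R : Type*} [DecidableEq ι] [NonUnitalNonAssocSemiring R]
    {s : Finset ι} {j : ι} (hj : j ∉ s) (p w : ι → R) (q : R) :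
    ∑ i ∈ insert j s, Function.update p j q i * w i = q * w j + ∑ i ∈ s, p i * w i := by
  rw [Finset.sum_insert hj, Function.update_self]
  exact congrArg _ <| Finset.sum_congr rfl fun i hi => by
    rw [Function.update_of_ne (ne_of_mem_of_not_mem hi hj)]

section MidpointConvex

variable {ι R : Type*} [CommRing R] [LinearOrder R]

/-- Dual form of the midpoint inequality of integral convexity for the function `F` on `S`, seen
through the coordinates in `s` only: an affine minorant of `F` on the integral neighbourhood of the
midpoint of `x` and `y` lies below `(F x + F y) / 2` at that midpoint. The slopes are taken in the
value ring `R`, so for `R = ℤ` only integral affine minorants are tested. -/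
def MidpointConvexOn (s : Finset ι) (S : Set (ι → ℤ)) (F : (ι → ℤ) → R) : Prop :=
  ∀ x ∈ S, ∀ y ∈ S, ∀ (p : ι → R) (α : R),
    (∀ z ∈ S, (∀ i ∈ s, |x i + y i - 2 * z i| ≤ 1) → ∑ i ∈ s, p i * z i + α ≤ F z) →
    ∑ i ∈ s, p i * (x i + y i) + 2 * α ≤ F x + F y

theorem MidpointConvexOn.le_add_of_slice [DecidableEq ι] {s : Finset ι} {j : ι} (hj : j ∉ s)
    {S : Set (ι → ℤ)} {F : (ι → ℤ) → R} (hF : MidpointConvexOn (insert j s) S F) {p : ι → R}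
    {α : R} {k : ℤ} (hminorant : ∀ z ∈ S, z j = k → ∑ i ∈ s, p i * z i + α ≤ F z)
    {x y : ι → ℤ} (hx : x ∈ S) (hy : y ∈ S) (hxy : x j + y j = 2 * k) :
    ∑ i ∈ s, p i * (x i + y i) + 2 * α ≤ F x + F y := by
  have := hF x hx y hy (Function.update p j 0) α fun z hz hz_near => by
    have := abs_le.1 (hz_near j (Finset.mem_insert_self j s))
    rw [sum_insert_update_mul hj, zero_mul, zero_add]
    exact hminorant z hz (by omega)
  rwa [sum_insert_update_mul hj p fun i => (x i + y i : R), zero_mul, zero_add] at this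

theorem MidpointConvexOn.inter_box [Fintype ι] {S : Set (ι → ℤ)} {F : (ι → ℤ) → R}
    (hF : MidpointConvexOn Finset.univ S F) (c : ι → ℤ) :
    MidpointConvexOn Finset.univ {x ∈ S | ∀ i, |x i - c i| ≤ 1} F :=
  fun x hx y hy p α hminorant => hF x hx.1 y hy.1 p α fun z hz hz_near =>
    hminorant z ⟨hz, fun i => by
      have hxi := abs_le.1 (hx.2 i)
      have hyi := abs_le.1 (hy.2 i)
      have hzi := abs_le.1 (hz_near i (Finset.mem_univ i))
      rw [abs_le]
      omega⟩ hz_near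

variable [IsStrictOrderedRing R]

theorem MidpointConvexOn.of_intCast {s : Finset ι} {S : Set (ι → ℤ)} {G : (ι → ℤ) → R}
    (hG : MidpointConvexOn s S G) {F : (ι → ℤ) → ℤ} (hFG : ∀ x ∈ S, (F x : R) = G x) :
    MidpointConvexOn s S F := by
  intro x hx y hy p α hminorant
  have := hG x hx y hy (fun i => p i) α fun z hz hz_near => by
    rw [← hFG z hz]
    exact_mod_cast hminorant z hz hz_near
  rw [← hFG x hx, ← hFG y hy] at this
  exact_mod_cast this

theorem MidpointConvexOn.add_coordinate [DecidableEq ι] {s : Finset ι} {j : ι} (hj : j ∉ s)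
    {S : Set (ι → ℤ)} {F : (ι → ℤ) → R} (hF : MidpointConvexOn (insert j s) S F) {D : Set ℤ}
    {φ : ℤ → R} (hφ : DiscreteConvexOn D φ) :
    MidpointConvexOn s {x ∈ S | x j ∈ D} (fun x => F x + φ (x j)) := by
  rintro x ⟨hx, hxD⟩ y ⟨hy, hyD⟩ p α hminorant
  obtain ⟨σ, τ, hnear, hmid⟩ := hφ.exists_affine_near_midpoint hxD hyD
  have := hF x hx y hy (Function.update p j (-σ)) (α - τ) fun z hz hz_near => by
    obtain ⟨hzD, hzφ⟩ := hnear (z j) (hz_near j (Finset.mem_insert_self j s))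
    have := hminorant z ⟨hz, hzD⟩ fun i hi => hz_near i (Finset.mem_insert_of_mem hi)
    rw [sum_insert_update_mul hj]
    linarith
  rw [sum_insert_update_mul hj p fun i => (x i + y i : R)] at this
  linarith

/-- As the coefficients of `q` are `0` and `±1`, no division is needed to solve for it in `R`. -/
theorem exists_forall_mul_le_of_unit {T : Set (ℤ × R)} (hT : T.Finite)
    (hunit : ∀ u ∈ T, |u.1| ≤ 1) (hpair : ∀ u ∈ T, ∀ v ∈ T, u.1 + v.1 = 0 → 0 ≤ u.2 + v.2) :
    ∃ q : R, ∀ u ∈ T, q * u.1 ≤ u.2 := by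
  suffices ∃ q : R, (∀ u ∈ T, u.1 = 1 → q ≤ u.2) ∧ ∀ u ∈ T, u.1 = -1 → -q ≤ u.2 by
    obtain ⟨q, hupper, hlower⟩ := this
    refine ⟨q, fun u hu => ?_⟩
    obtain h | h | h : u.1 = 0 ∨ u.1 = 1 ∨ u.1 = -1 := by have := abs_le.1 (hunit u hu); omega
    · have := hpair u hu u hu (by omega)
      rw [h, Int.cast_zero, mul_zero]
      linarith
    · simpa [h] using hupper u hu h
    · simpa [h] using hlower u hu h
  rcases {u ∈ T | u.1 = -1}.eq_empty_or_nonempty with hempty | hne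
  · obtain ⟨q, hq⟩ := (hT.image Prod.snd).bddBelow
    exact ⟨q, fun u hu _ => hq ⟨u, hu, rfl⟩, fun u hu h => (hempty.subset ⟨hu, h⟩).elim⟩
  · obtain ⟨v, hv, hmin⟩ := Set.exists_min_image _ Prod.snd (hT.subset (Set.sep_subset _ _)) hne
    refine ⟨-v.2, fun u hu h => ?_, fun u hu h => by simpa using hmin u ⟨hu, h⟩⟩
    linarith [hpair u hu v hv.1 (by rw [h, hv.2]; rfl)]

/-- The constraints on `q` coming from `F` and from `φ` on the unit interval around `c j` are
pairwise compatible: two of `F` by midpoint convexity, two of `φ` by discrete convexity, and one of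
each by `hp`. -/
theorem MidpointConvexOn.exists_subgradient_component [DecidableEq ι] {s : Finset ι} {j : ι}
    (hj : j ∉ s) {S : Set (ι → ℤ)} {F : (ι → ℤ) → R} (hF : MidpointConvexOn (insert j s) S F)
    (hS : S.Finite) {c : ι → ℤ} (hbox : ∀ x ∈ S, |x j - c j| ≤ 1) {D : Set ℤ} {φ : ℤ → R}
    (hφ : DiscreteConvexOn D φ) (hcD : c j ∈ D) {p : ι → R}
    (hp : ∀ x ∈ S, x j ∈ D →
      F c + φ (c j) + ∑ i ∈ s, p i * (x i - c i) ≤ F x + φ (x j)) :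
    ∃ q : R, (∀ x ∈ S, F c + (q * (x j - c j) + ∑ i ∈ s, p i * (x i - c i)) ≤ F x) ∧
      ∀ t ∈ D, φ (c j) + -q * (t - c j) ≤ φ t := by
  set g : (ι → ℤ) → R := fun x => F x - F c - ∑ i ∈ s, p i * (x i - c i) with hg
  have hgφ : ∀ x ∈ S, x j ∈ D → φ (c j) ≤ g x + φ (x j) := fun x hx hxD => by
    linarith [hp x hx hxD]
  have hgg : ∀ x ∈ S, ∀ y ∈ S, x j + y j = 2 * c j → 0 ≤ g x + g y := by
    intro x hx y hy hxy
    have := hF.le_add_of_slice hj (p := p) (α := F c - ∑ i ∈ s, p i * c i) (fun z hz hzj => by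
      have := hgφ z hz (hzj ▸ hcD)
      simp only [hg, hzj, mul_sub, Finset.sum_sub_distrib] at this
      linarith) hx hy hxy
    simp only [hg, mul_sub, mul_add, Finset.sum_add_distrib, Finset.sum_sub_distrib] at this ⊢
    linarith
  obtain ⟨q, hq⟩ := exists_forall_mul_le_of_unit
    (T := (fun x => (x j - c j, g x)) '' S ∪
      (fun t => (c j - t, φ t - φ (c j))) '' {t ∈ D | |t - c j| ≤ 1})
    ((hS.image _).union (((Set.finite_Icc (c j - 1) (c j + 1)).subset fun t ht => by
      have := abs_le.1 ht.2
      exact ⟨by omega, by omega⟩).image _))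
    (by
      rintro _ (⟨x, hx, rfl⟩ | ⟨t, ht, rfl⟩)
      exacts [hbox x hx, abs_sub_comm t (c j) ▸ ht.2])
    (by
      rintro _ (⟨x, hx, rfl⟩ | ⟨t, ht, rfl⟩) _ (⟨y, hy, rfl⟩ | ⟨u, hu, rfl⟩) h
      · exact hgg x hx y hy (by linarith)
      · obtain rfl : x j = u := by linarith
        linarith [hgφ x hx hu.1]
      · obtain rfl : y j = t := by linarith
        linarith [hgφ y hy ht.1]
      · linarith [hφ.two_mul_le_of_add_eq ht.1 hu.1 (m := c j) (by linarith)])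
  refine ⟨q, fun x hx => ?_, fun t ht => ?_⟩
  · have := hq _ (Or.inl ⟨x, hx, rfl⟩)
    push_cast at this
    linarith
  · refine hφ.add_mul_sub_le_of_forall_abs_sub_le_one hcD (fun u hu huc => ?_) ht
    have := hq _ (Or.inr ⟨u, ⟨hu, huc⟩, rfl⟩)
    push_cast at this
    linarith

theorem MidpointConvexOn.exists_subgradient_of_box {s : Finset ι} {S : Set (ι → ℤ)}
    {F : (ι → ℤ) → R} (hF : MidpointConvexOn s S F) (hS : S.Finite) {D : ι → Set ℤ}
    {φ : ι → ℤ → R} (hφ : ∀ i ∈ s, DiscreteConvexOn (D i) (φ i)) {c : ι → ℤ}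
    (hbox : ∀ x ∈ S, ∀ i ∈ s, |x i - c i| ≤ 1) (hcD : ∀ i ∈ s, c i ∈ D i)
    (hmin : ∀ x ∈ S, (∀ i ∈ s, x i ∈ D i) →
      F c + ∑ i ∈ s, φ i (c i) ≤ F x + ∑ i ∈ s, φ i (x i)) :
    ∃ p : ι → R, (∀ x ∈ S, F c + ∑ i ∈ s, p i * (x i - c i) ≤ F x) ∧
      ∀ i ∈ s, ∀ t ∈ D i, φ i (c i) + -p i * (t - c i) ≤ φ i t := by
  classical
  induction s using Finset.induction_on generalizing S F with
  | empty => exact ⟨0, by simpa using hmin, by simp⟩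
  | insert j s hj ih =>
    rw [Finset.forall_mem_insert] at hφ hcD
    simp only [Finset.forall_mem_insert] at hbox hmin ⊢
    obtain ⟨p, hp, hpφ⟩ := ih (hF.add_coordinate hj hφ.1) (hS.subset (Set.sep_subset _ _)) hφ.2
      (fun x hx => (hbox x hx.1).2) hcD.2 fun x hx hxs => by
        simpa only [Finset.sum_insert hj, add_assoc] using hmin x hx.1 ⟨hx.2, hxs⟩
    obtain ⟨q, hq, hqφ⟩ := hF.exists_subgradient_component hj hS (fun x hx => (hbox x hx).1)
      hφ.1 hcD.1 fun x hx hxD => hp x ⟨hx, hxD⟩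
    refine ⟨Function.update p j q, fun x hx => ?_, ?_, fun i hi => ?_⟩
    · rw [sum_insert_update_mul hj p fun i => (x i - c i : R)]
      exact hq x hx
    · rwa [Function.update_self]
    · rw [Function.update_of_ne (ne_of_mem_of_not_mem hi hj)]
      exact hpφ i hi

variable [Fintype ι] {S : Set (ι → ℤ)} {F : (ι → ℤ) → R}

/-- The neighbourhood of the midpoint of `c` and `x` is closer to `c` than `x` is, so the bound
propagates outwards from the unit box. -/
theorem MidpointConvexOn.subgradient_of_box (hF : MidpointConvexOn Finset.univ S F) {c : ι → ℤ}
    {p : ι → R} (hc : c ∈ S)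
    (hbox : ∀ x ∈ S, (∀ i, |x i - c i| ≤ 1) → F c + ∑ i, p i * (x i - c i) ≤ F x)
    {x : ι → ℤ} (hx : x ∈ S) : F c + ∑ i, p i * (x i - c i) ≤ F x := by
  obtain ⟨K, hK⟩ : ∃ K : ℕ, ∀ i, |x i - c i| ≤ K + 1 := by
    obtain ⟨K, hK⟩ := (Set.finite_range fun i => (x i - c i).natAbs).bddAbove
    exact ⟨K, fun i => by have := hK ⟨i, rfl⟩; dsimp only at this; rw [Int.abs_eq_natAbs]; omega⟩
  induction K generalizing x with
  | zero => exact hbox x hx (by simpa using hK)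
  | succ K ih =>
    have := hF c hc x hx p (F c - ∑ i, p i * c i) fun z hz hz_near => by
      have := ih hz fun i => by
        have hzi := abs_le.1 (hz_near i (Finset.mem_univ i))
        have hxi := abs_le.1 (hK i)
        rw [abs_le]
        omega
      simp only [mul_sub, Finset.sum_sub_distrib] at this
      linarith
    simp only [mul_sub, mul_add, Finset.sum_add_distrib, Finset.sum_sub_distrib] at this ⊢
    linarith

theorem MidpointConvexOn.exists_subgradient (hF : MidpointConvexOn Finset.univ S F)
    {D : ι → Set ℤ} {φ : ι → ℤ → R} (hφ : ∀ i, DiscreteConvexOn (D i) (φ i)) {c : ι → ℤ}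
    (hc : c ∈ S) (hcD : c ∈ Set.univ.pi D)
    (hmin : ∀ x ∈ S, x ∈ Set.univ.pi D → F c + ∑ i, φ i (c i) ≤ F x + ∑ i, φ i (x i)) :
    ∃ p : ι → R, (∀ x ∈ S, F c + ∑ i, p i * (x i - c i) ≤ F x) ∧
      ∀ x ∈ Set.univ.pi D, ∑ i, φ i (c i) - ∑ i, p i * (x i - c i) ≤ ∑ i, φ i (x i) := by
  have hfinite : {x ∈ S | ∀ i, |x i - c i| ≤ 1}.Finite :=
    (Set.Finite.pi' fun i => Set.finite_Icc (c i - 1) (c i + 1)).subset fun x hx i => by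
      have := abs_le.1 (hx.2 i)
      exact ⟨by omega, by omega⟩
  obtain ⟨p, hp, hpφ⟩ := (hF.inter_box c).exists_subgradient_of_box hfinite
    (fun i _ => hφ i) (fun x hx i _ => hx.2 i) (fun i _ => hcD i trivial)
    fun x hx hxD => hmin x hx.1 fun i _ => hxD i (Finset.mem_univ i)
  refine ⟨p, fun x hx => hF.subgradient_of_box hc (fun x hx hxc => hp x ⟨hx, hxc⟩) hx,
    fun x hx => ?_⟩
  rw [← Finset.sum_sub_distrib]
  exact Finset.sum_le_sum fun i hi => by linarith [hpφ i hi (x i) (hx i trivial)]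

end MidpointConvex

/-- The distance from an integer to a nonempty set of integers, with natural values so that its
integral multiples can serve as penalties in integer-valued duality. -/
noncomputable def natDist (D : Set ℤ) (t : ℤ) : ℕ :=
  sInf ((fun d => (t - d).natAbs) '' D)

theorem natDist_le {D : Set ℤ} {d : ℤ} (hd : d ∈ D) (t : ℤ) : natDist D t ≤ (t - d).natAbs :=
  Nat.sInf_le ⟨d, hd, rfl⟩

theorem exists_natAbs_sub_eq_natDist {D : Set ℤ} (hD : D.Nonempty) (t : ℤ) :
    ∃ d ∈ D, (t - d).natAbs = natDist D t :=
  Nat.sInf_mem (hD.image _)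

theorem natDist_eq_zero_iff {D : Set ℤ} (hD : D.Nonempty) {t : ℤ} :
    natDist D t = 0 ↔ t ∈ D := by
  refine ⟨fun h => ?_, fun ht => by simpa using natDist_le ht t⟩
  obtain ⟨d, hd, hdt⟩ := exists_natAbs_sub_eq_natDist hD t
  obtain rfl : t = d := by omega
  exact hd

theorem discreteConvexOn_natDist {D : Set ℤ} (hD : D.OrdConnected) (hne : D.Nonempty) :
    DiscreteConvexOn Set.univ (fun t => (natDist D t : ℤ)) where
  ordConnected := Set.ordConnected_univ
  two_mul_le t _ _ := by
    obtain ⟨a, ha, hat⟩ := exists_natAbs_sub_eq_natDist hne (t - 1)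
    obtain ⟨b, hb, hbt⟩ := exists_natAbs_sub_eq_natDist hne (t + 1)
    have hmid : ∀ m ∈ Set.uIcc a b, natDist D t ≤ (t - m).natAbs := fun m hm =>
      natDist_le (hD.uIcc_subset ha hb hm) t
    have hfloor := hmid ((a + b) / 2) (Set.mem_uIcc.2 (by omega))
    have hceil := hmid ((a + b + 1) / 2) (Set.mem_uIcc.2 (by omega))
    omega

theorem exists_forall_le_of_int_bddBelow {X : Type*} {A : Set X} (hA : A.Nonempty) {H : X → ℤ}
    {b : ℤ} (hb : ∀ x ∈ A, b ≤ H x) : ∃ c ∈ A, ∀ x ∈ A, H c ≤ H x := by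
  obtain ⟨_, ⟨c, hc, rfl⟩, hmin⟩ := Int.exists_least_of_bdd (P := (· ∈ H '' A))
    ⟨b, Set.forall_mem_image.2 hb⟩ (hA.image H)
  exact ⟨c, hc, fun x hx => hmin _ ⟨x, hx, rfl⟩⟩

/-- A large multiple of the distance to the box `Set.univ.pi D`, which vanishes on the box and is
at least `1` on `S`, turns a subgradient into a dual vector of arbitrarily large value. -/
theorem MidpointConvexOn.exists_separating_of_disjoint {ι : Type*} [Fintype ι] {S : Set (ι → ℤ)}
    {F : (ι → ℤ) → ℤ} (hF : MidpointConvexOn Finset.univ S F) (hS : S.Nonempty)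
    {D : ι → Set ℤ} (hD : ∀ i, (D i).OrdConnected) (hne : ∀ i, (D i).Nonempty)
    (hdisj : Disjoint S (Set.univ.pi D)) {p₀ : ι → ℤ} {v : ℤ}
    (hv : ∀ x ∈ S, ∑ i, p₀ i * x i - F x ≤ v) (M : ℤ) :
    ∃ (p : ι → ℤ) (w : ℤ), (∀ x ∈ S, ∑ i, p i * x i - F x ≤ w) ∧
      ∀ x ∈ Set.univ.pi D, ∑ i, p₀ i * x i + M + w ≤ ∑ i, p i * x i := by
  set N : ℤ := max 0 (M + v)
  set φ : ι → ℤ → ℤ := fun i t => N * natDist (D i) t - p₀ i * t with hφ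
  have hφ_sum : ∀ x : ι → ℤ,
      ∑ i, φ i (x i) = N * ∑ i, (natDist (D i) (x i) : ℤ) - ∑ i, p₀ i * x i := fun x => by
    rw [hφ, Finset.sum_sub_distrib, Finset.mul_sum]
  have hφ_convex : ∀ i, DiscreteConvexOn Set.univ (φ i) := fun i => by
    simpa only [neg_mul, ← sub_eq_add_neg, Int.cast_id] using
      ((discreteConvexOn_natDist (hD i) (hne i)).const_mul (le_max_left _ _)).add_mul (-p₀ i)
  have hbdd : ∀ x ∈ S, M ≤ F x + ∑ i, φ i (x i) := fun x hx => by
    obtain ⟨j, hj⟩ : ∃ j, x j ∉ D j := by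
      simpa [Set.mem_univ_pi] using hdisj.notMem_of_mem_left hx
    have hdist : 1 ≤ ∑ i, (natDist (D i) (x i) : ℤ) := by
      have := Finset.single_le_sum (f := fun i => natDist (D i) (x i)) (fun i _ => Nat.zero_le _)
        (Finset.mem_univ j)
      have := mt (natDist_eq_zero_iff (hne j)).1 hj
      rw [← Nat.cast_sum]
      omega
    have hN : N ≤ N * ∑ i, (natDist (D i) (x i) : ℤ) :=
      le_mul_of_one_le_right (le_max_left _ _) hdist
    linarith [hφ_sum x, hv x hx, le_max_right 0 (M + v)]
  obtain ⟨c, hc, hmin⟩ := exists_forall_le_of_int_bddBelow hS hbdd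
  obtain ⟨p, hp, hpφ⟩ := hF.exists_subgradient hφ_convex hc (fun _ _ => trivial)
    fun x hx _ => hmin x hx
  simp only [Int.cast_id, mul_sub, Finset.sum_sub_distrib] at hp hpφ
  refine ⟨p, ∑ i, p i * c i - F c, fun x hx => by linarith [hp x hx], fun x hx => ?_⟩
  have hdist : ∑ i, (natDist (D i) (x i) : ℤ) = 0 :=
    Finset.sum_eq_zero fun i _ => by
      exact_mod_cast (natDist_eq_zero_iff (hne i)).2 (hx i trivial)
  have := hpφ x fun _ _ => trivial
  rw [hφ_sum x, hdist] at this
  linarith [hbdd c hc]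

theorem coe_finsetSum {X : Type*} (t : Finset X) (g : X → ℝ) :
    ((∑ x ∈ t, g x : ℝ) : EReal) = ∑ x ∈ t, (g x : EReal) :=
  map_sum (⟨⟨Real.toEReal, EReal.coe_zero⟩, EReal.coe_add⟩ : ℝ →+ EReal) g t

theorem le_localConvexExt {n : ℕ} {f : (Fin n → ℤ) → EReal} {u : Fin n → ℝ} {p : Fin n → ℝ} {α : ℝ}
    (hminorant : ∀ z ∈ intNbhd u, ((∑ i, p i * z i + α : ℝ) : EReal) ≤ f z) :
    ((∑ i, p i * u i + α : ℝ) : EReal) ≤ localConvexExt f u := by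
  refine le_sInf ?_
  rintro _ ⟨t, lam, hnear, hnonneg, hone, hbary, rfl⟩
  have hcomb : ∑ i, p i * u i + α = ∑ z ∈ t, lam z * (∑ i, p i * z i + α) := by
    simp only [mul_add, Finset.sum_add_distrib, ← Finset.sum_mul, hone, one_mul, Finset.mul_sum,
      ← hbary]
    rw [Finset.sum_comm]
    simp only [mul_left_comm]
  rw [hcomb, coe_finsetSum]
  exact Finset.sum_le_sum fun z hz => by
    rw [EReal.coe_mul]
    exact mul_le_mul_of_nonneg_left (hminorant z (hnear z hz)) (EReal.coe_nonneg.2 (hnonneg z hz))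

theorem mem_intNbhd_midpoint {n : ℕ} {x y z : Fin n → ℤ} :
    z ∈ intNbhd (fun i => ((x i + y i : ℤ) : ℝ) / 2) ↔ ∀ i, |x i + y i - 2 * z i| ≤ 1 := by
  refine forall_congr' fun i => ?_
  have hscale : ((x i + y i : ℤ) : ℝ) / 2 - z i = ((x i + y i - 2 * z i : ℤ) : ℝ) / 2 := by
    push_cast
    ring
  rw [hscale, abs_div, abs_two, div_lt_one two_pos, ← Int.lt_add_one_iff]
  exact_mod_cast Iff.rfl

theorem IntegrallyConvexFn.midpointConvexOn {n : ℕ} {f : (Fin n → ℤ) → EReal}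
    (hf : IntegrallyConvexFn f) (hbot : ∀ x, f x ≠ ⊥) :
    MidpointConvexOn Finset.univ {x | f x ≠ ⊤} (fun x => (f x).toReal) := by
  intro x hx y hy p α hminorant
  by_cases hfar : ∃ i, 2 ≤ |x i - y i|
  · have hle := (le_localConvexExt (p := p) (α := α) fun z hz => by
      by_cases hfz : f z = ⊤
      · exact hfz ▸ le_top
      · rw [← EReal.coe_toReal hfz (hbot z), EReal.coe_le_coe_iff]
        exact hminorant z hfz fun i _ => mem_intNbhd_midpoint.1 hz i).trans (hf.2 x y hfar)
    rw [← EReal.coe_toReal hx (hbot x), ← EReal.coe_toReal hy (hbot y), ← EReal.coe_add,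
      show (2 : EReal) = ((2 : ℝ) : EReal) from rfl, ← EReal.coe_div, EReal.coe_le_coe_iff] at hle
    simp only [Int.cast_add, mul_div_assoc', ← Finset.sum_div] at hle
    linarith
  · push Not at hfar
    have hx' := hminorant x hx fun i _ => by
      have := abs_lt.1 (hfar i)
      rw [abs_le]
      omega
    have hy' := hminorant y hy fun i _ => by
      have := abs_lt.1 (hfar i)
      rw [abs_le]
      omega
    simp only [mul_add, Finset.sum_add_distrib]
    linarith

theorem IntegrallyConvexFn.midpointConvexOn_floor_toReal {n : ℕ} {f : (Fin n → ℤ) → EReal}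
    (hf : IntegrallyConvexFn f) (hfZ : ∀ z, f z = ⊤ ∨ ∃ m : ℤ, f z = ((m : ℝ) : EReal)) :
    MidpointConvexOn Finset.univ {x | f x ≠ ⊤} (fun x => ⌊(f x).toReal⌋) := by
  refine (hf.midpointConvexOn fun x => ?_).of_intCast fun x hx => ?_
  · rcases hfZ x with h | ⟨m, h⟩
    · exact h ▸ top_ne_bot
    · exact h ▸ EReal.coe_ne_bot _
  · obtain ⟨m, h⟩ := (hfZ x).resolve_left hx
    rw [h, EReal.toReal_coe, Int.floor_intCast]

/-- The extended integer-valued function that is `F` on its effective domain `S` and `⊤` outside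
it. -/
noncomputable def extendTop {X : Type*} (S : Set X) (F : X → ℤ) (x : X) : EReal :=
  open Classical in if x ∈ S then ((F x : ℝ) : EReal) else ⊤

section ExtendTop

variable {X : Type*} {S T : Set X} {F G : X → ℤ} {x : X}

theorem extendTop_of_mem (hx : x ∈ S) : extendTop S F x = ((F x : ℝ) : EReal) :=
  if_pos hx

theorem extendTop_of_notMem (hx : x ∉ S) : extendTop S F x = ⊤ :=
  if_neg hx

theorem eq_extendTop {f : X → EReal} (hf : ∀ x, f x = ⊤ ∨ ∃ m : ℤ, f x = ((m : ℝ) : EReal)) :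
    f = extendTop {x | f x ≠ ⊤} fun x => ⌊(f x).toReal⌋ := by
  funext x
  rcases hf x with hx | ⟨m, hx⟩
  · rw [extendTop_of_notMem (not_not.2 hx), hx]
  · have hx_mem : f x ≠ ⊤ := hx ▸ EReal.coe_ne_top _
    rw [extendTop_of_mem (S := {x | f x ≠ ⊤}) hx_mem, hx, EReal.toReal_coe, Int.floor_intCast]

theorem extendTop_add_extendTop (x : X) :
    extendTop S F x + extendTop T G x = extendTop (S ∩ T) (fun x => F x + G x) x := by
  by_cases hS : x ∈ S <;> by_cases hT : x ∈ T <;> simp [extendTop, hS, hT]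

theorem intCast_le_extendTop_iff {m : ℤ} :
    ((m : ℝ) : EReal) ≤ extendTop S F x ↔ (x ∈ S → m ≤ F x) := by
  by_cases hx : x ∈ S
  · simp [extendTop_of_mem hx, hx]
  · simp [extendTop_of_notMem hx, hx]

theorem sum_neg_extendTop {ι : Type*} [Fintype ι] {D : ι → Set ℤ} {φ : ι → ℤ → ℤ} (x : ι → ℤ) :
    ∑ i, (-extendTop (D i) (φ i)) (x i) =
      (-extendTop (Set.univ.pi D) fun x => ∑ i, φ i (x i)) x := by
  by_cases hx : x ∈ Set.univ.pi D
  · rw [Pi.neg_apply, extendTop_of_mem hx, ← EReal.coe_neg, Int.cast_sum, ← Finset.sum_neg_distrib,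
      coe_finsetSum]
    exact Finset.sum_congr rfl fun i _ => by
      rw [Pi.neg_apply, extendTop_of_mem (hx i trivial), EReal.coe_neg]
  · obtain ⟨j, hj⟩ : ∃ j, x j ∉ D j := by simpa [Set.mem_univ_pi] using hx
    classical
    rw [← Finset.add_sum_erase _ _ (Finset.mem_univ j), Pi.neg_apply, Pi.neg_apply,
      extendTop_of_notMem hj, extendTop_of_notMem hx, EReal.neg_top, EReal.bot_add]

theorem exists_discreteConvexOn_eq_neg_extendTop {ψ : ℤ → EReal}
    (hZ : ∀ k, ψ k = ⊥ ∨ ∃ m : ℤ, ψ k = ((m : ℝ) : EReal))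
    (hint : ∀ k l m : ℤ, k ≤ l → l ≤ m → ψ k ≠ ⊥ → ψ m ≠ ⊥ → ψ l ≠ ⊥)
    (hconc : ∀ k : ℤ, ψ (k - 1) + ψ (k + 1) ≤ (2 : EReal) * ψ k) :
    ∃ (D : Set ℤ) (φ : ℤ → ℤ), DiscreteConvexOn D φ ∧ ψ = -extendTop D φ := by
  have hcoe : ∀ k, ∃ m : ℤ, ψ k ≠ ⊥ → ψ k = -((m : ℝ) : EReal) := fun k => by
    rcases hZ k with hk | ⟨m, hk⟩
    · exact ⟨0, fun h => absurd hk h⟩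
    · exact ⟨-m, fun _ => by simpa using hk⟩
  choose φ hφ using hcoe
  refine ⟨{k | ψ k ≠ ⊥}, φ, ⟨⟨fun k hk m hm l hl => hint k l m hl.1 hl.2 hk hm⟩,
    fun k hk hk' => ?_⟩, funext fun k => ?_⟩
  · have hk_mid : ψ k ≠ ⊥ := hint (k - 1) k (k + 1) (by omega) (by omega) hk hk'
    have hle := hconc k
    rw [hφ _ hk, hφ _ hk', hφ k hk_mid, show (2 : EReal) = ((2 : ℝ) : EReal) from rfl] at hle
    have : -(φ (k - 1) : ℝ) + -φ (k + 1) ≤ 2 * -φ k := by exact_mod_cast hle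
    rify
    linarith
  · by_cases hk : ψ k = ⊥
    · rw [Pi.neg_apply, extendTop_of_notMem (not_not.2 hk), EReal.neg_top, hk]
    · rw [Pi.neg_apply, extendTop_of_mem (S := {k | ψ k ≠ ⊥}) hk, hφ k hk]

end ExtendTop

section Conjugate

variable {ι : Type*} [Fintype ι]

/-- The integral conjugate `f•` of a function `f : ℤⁿ → ℤ ∪ {+∞}`. -/
noncomputable def convexConj (f : (ι → ℤ) → EReal) (p : ι → ℤ) : EReal :=
  ⨆ x : ι → ℤ, ((((∑ i, p i * x i : ℤ) : ℝ) : EReal) - f x)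

/-- The integral concave conjugate `Ψ°` of a function `Ψ : ℤⁿ → ℤ ∪ {-∞}`. -/
noncomputable def concaveConj (Ψ : (ι → ℤ) → EReal) (p : ι → ℤ) : EReal :=
  ⨅ x : ι → ℤ, ((((∑ i, p i * x i : ℤ) : ℝ) : EReal) - Ψ x)

variable {S T : Set (ι → ℤ)} {F G : (ι → ℤ) → ℤ} {p : ι → ℤ}

theorem convexConj_extendTop_le_iff {v : ℤ} :
    convexConj (extendTop S F) p ≤ ((v : ℝ) : EReal) ↔ ∀ x ∈ S, ∑ i, p i * x i - F x ≤ v := by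
  refine iSup_le_iff.trans (forall_congr' fun x => ?_)
  by_cases hx : x ∈ S
  · rw [extendTop_of_mem hx, ← EReal.coe_sub, ← Int.cast_sub, EReal.coe_le_coe_iff, Int.cast_le,
      forall_prop_of_true hx]
  · simp [extendTop_of_notMem hx, hx]

theorem le_concaveConj_neg_extendTop_iff {u : ℤ} :
    ((u : ℝ) : EReal) ≤ concaveConj (-extendTop T G) p ↔
      ∀ x ∈ T, u ≤ ∑ i, p i * x i + G x := by
  refine le_iInf_iff.trans (forall_congr' fun x => ?_)
  by_cases hx : x ∈ T
  · rw [Pi.neg_apply, extendTop_of_mem hx, sub_eq_add_neg, neg_neg, ← EReal.coe_add, ← Int.cast_add,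
      EReal.coe_le_coe_iff, Int.cast_le, forall_prop_of_true hx]
  · simp [extendTop_of_notMem hx, hx]

theorem concaveConj_sub_convexConj_le (f Ψ : (ι → ℤ) → EReal) (p x : ι → ℤ) :
    concaveConj Ψ p - convexConj f p ≤ f x - Ψ x := by
  have hcancel : ∀ (l : ℝ) (a b : EReal), (l - b) - (l - a) ≤ a - b := by
    intro l a b
    induction a <;> induction b <;> simp [← EReal.coe_sub]
  exact (EReal.sub_le_sub (iInf_le _ x) (le_iSup (fun x => (_ : EReal) - f x) x)).trans
    (hcancel _ _ _)

theorem iSup_dual_le_iInf_primal (f Ψ : (ι → ℤ) → EReal) :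
    (⨆ p, (concaveConj Ψ p - convexConj f p)) ≤ ⨅ x, (f x - Ψ x) :=
  iSup_le fun p => le_iInf fun x => concaveConj_sub_convexConj_le f Ψ p x

theorem fenchel_duality_of_le {f Ψ : (ι → ℤ) → EReal} {c p : ι → ℤ}
    (hle : f c - Ψ c ≤ concaveConj Ψ p - convexConj f p) :
    (⨅ x, (f x - Ψ x)) = (⨆ p, (concaveConj Ψ p - convexConj f p)) ∧
      (∃ x, f x - Ψ x = ⨅ x, (f x - Ψ x)) ∧
      ∃ p, concaveConj Ψ p - convexConj f p = ⨆ p, (concaveConj Ψ p - convexConj f p) := by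
  have hprimal : (⨅ x, (f x - Ψ x)) ≤ f c - Ψ c := iInf_le _ c
  have hdual := le_iSup (fun p => concaveConj Ψ p - convexConj f p) p
  have hweak := iSup_dual_le_iInf_primal f Ψ
  exact ⟨le_antisymm (hprimal.trans (hle.trans hdual)) hweak,
    ⟨c, le_antisymm (hle.trans (hdual.trans hweak)) hprimal⟩,
    ⟨p, le_antisymm hdual (hweak.trans (hprimal.trans hle))⟩⟩

theorem sub_le_concaveConj_sub_convexConj_extendTop {u v : ℤ}
    (hu : ∀ x ∈ T, u ≤ ∑ i, p i * x i + G x) (hv : ∀ x ∈ S, ∑ i, p i * x i - F x ≤ v) :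
    (((u - v : ℤ) : ℝ) : EReal) ≤
      concaveConj (-extendTop T G) p - convexConj (extendTop S F) p := by
  rw [Int.cast_sub, EReal.coe_sub]
  exact EReal.sub_le_sub (le_concaveConj_neg_extendTop_iff.2 hu) (convexConj_extendTop_le_iff.2 hv)

theorem exists_intCast_le_of_ne_bot {a : EReal} (ha : a ≠ ⊥) :
    ∃ m : ℤ, ((m : ℝ) : EReal) ≤ a := by
  obtain ⟨r, -, hr⟩ := EReal.lt_iff_exists_real_btwn.1 (bot_lt_iff_ne_bot.2 ha)
  exact ⟨⌊r⌋, (EReal.coe_le_coe (Int.floor_le r)).trans hr.le⟩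

theorem exists_le_intCast_of_ne_top {a : EReal} (ha : a ≠ ⊤) :
    ∃ m : ℤ, a ≤ ((m : ℝ) : EReal) := by
  obtain ⟨m, hm⟩ := exists_intCast_le_of_ne_bot (a := -a) (by simpa using ha)
  exact ⟨-m, by simpa using EReal.neg_le_neg_iff.2 hm⟩

theorem eq_top_of_forall_intCast_le {a : EReal} (ha : ∀ m : ℤ, ((m : ℝ) : EReal) ≤ a) : a = ⊤ := by
  by_contra h
  obtain ⟨m, hm⟩ := exists_le_intCast_of_ne_top h
  have := EReal.coe_le_coe_iff.1 ((ha (m + 1)).trans hm)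
  rw [Int.cast_le] at this
  omega

section StrongDuality

variable {D : ι → Set ℤ} {f Ψ : (ι → ℤ) → EReal}

theorem MidpointConvexOn.exists_primal_le_dual (hF : MidpointConvexOn Finset.univ S F)
    {φ : ι → ℤ → ℤ} (hφ : ∀ i, DiscreteConvexOn (D i) (φ i)) (hfF : f = extendTop S F)
    (hΨφ : Ψ = -extendTop (Set.univ.pi D) fun x => ∑ i, φ i (x i))
    (hfeas : (S ∩ Set.univ.pi D).Nonempty) (hbdd : (⨅ x, (f x - Ψ x)) ≠ ⊥) :
    ∃ c p, f c - Ψ c ≤ concaveConj Ψ p - convexConj f p := by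
  have hprimal : ∀ x, f x - Ψ x =
      extendTop (S ∩ Set.univ.pi D) (fun x => F x + ∑ i, φ i (x i)) x := fun x => by
    rw [hfF, hΨφ, Pi.neg_apply, sub_eq_add_neg, neg_neg, extendTop_add_extendTop]
  obtain ⟨b, hb⟩ := exists_intCast_le_of_ne_bot hbdd
  obtain ⟨c, hc, hmin⟩ := exists_forall_le_of_int_bddBelow hfeas fun x =>
    intCast_le_extendTop_iff.1 ((hb.trans (iInf_le _ x)).trans_eq (hprimal x))
  obtain ⟨p, hp, hpφ⟩ := hF.exists_subgradient hφ hc.1 hc.2 fun x hx hxD => hmin x ⟨hx, hxD⟩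
  simp only [Int.cast_id, mul_sub, Finset.sum_sub_distrib] at hp hpφ
  have hbounds := sub_le_concaveConj_sub_convexConj_extendTop (S := S) (F := F)
    (T := Set.univ.pi D) (G := fun x => ∑ i, φ i (x i)) (p := p)
    (u := ∑ i, p i * c i + ∑ i, φ i (c i)) (v := ∑ i, p i * c i - F c)
    (fun x hx => by linarith [hpφ x hx]) (fun x hx => by linarith [hp x hx])
  refine ⟨c, p, ?_⟩
  rw [hprimal, extendTop_of_mem hc, hfF, hΨφ]
  convert hbounds using 3
  ring

theorem MidpointConvexOn.iSup_dual_eq_top_of_disjoint (hF : MidpointConvexOn Finset.univ S F)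
    (hS : S.Nonempty) (hD : ∀ i, (D i).OrdConnected) (hne : (Set.univ.pi D).Nonempty)
    (hfF : f = extendTop S F) (hΨG : Ψ = -extendTop (Set.univ.pi D) G)
    (hdisj : Disjoint S (Set.univ.pi D))
    (hbot : (⨆ p, (concaveConj Ψ p - convexConj f p)) ≠ ⊥) :
    (⨆ p, (concaveConj Ψ p - convexConj f p)) = ⊤ := by
  obtain ⟨p₀, hp₀⟩ := not_forall.1 (mt iSup_eq_bot.2 hbot)
  have hconcave : concaveConj Ψ p₀ ≠ ⊥ := fun h => hp₀ (by rw [h, EReal.bot_sub])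
  have hconvex : convexConj f p₀ ≠ ⊤ := fun h => hp₀ (by rw [h, EReal.sub_top])
  obtain ⟨u, hu⟩ := exists_intCast_le_of_ne_bot hconcave
  obtain ⟨v, hv⟩ := exists_le_intCast_of_ne_top hconvex
  rw [hΨG, le_concaveConj_neg_extendTop_iff] at hu
  rw [hfF, convexConj_extendTop_le_iff] at hv
  refine eq_top_of_forall_intCast_le fun m => ?_
  obtain ⟨p, w, hpw, hpD⟩ := hF.exists_separating_of_disjoint hS hD
    (Set.univ_pi_nonempty_iff.1 hne) hdisj hv (m - u)
  have hbounds := sub_le_concaveConj_sub_convexConj_extendTop (T := Set.univ.pi D) (G := G)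
    (u := m + w) (fun x hx => by linarith [hu x hx, hpD x hx]) hpw
  rw [add_sub_cancel_right, ← hfF, ← hΨG] at hbounds
  exact hbounds.trans (le_iSup (fun p => concaveConj Ψ p - convexConj f p) p)

end StrongDuality

end Conjugate

theorem fenchel_duality_integrally_convex_separable_concave_general {ι : Type*} [Fintype ι]
    (f : (ι → ℤ) → EReal)
    (hfZ : ∀ z, f z = ⊤ ∨ ∃ m : ℤ, f z = ((m : ℝ) : EReal))
    (hdomf : ∃ x, f x ≠ ⊤)
    (hf : MidpointConvexOn Finset.univ {x | f x ≠ ⊤} (fun x => ⌊(f x).toReal⌋))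
    (ψ : ι → ℤ → EReal)
    (hψZ : ∀ i k, ψ i k = ⊥ ∨ ∃ m : ℤ, ψ i k = ((m : ℝ) : EReal))
    (hψint : ∀ i (k l m : ℤ), k ≤ l → l ≤ m → ψ i k ≠ ⊥ → ψ i m ≠ ⊥ → ψ i l ≠ ⊥)
    (hψconc : ∀ i (k : ℤ), ψ i (k - 1) + ψ i (k + 1) ≤ (2 : EReal) * ψ i k)
    {Ψ : (ι → ℤ) → EReal} (hΨ : Ψ = fun x => ∑ i, ψ i (x i)) (hdomΨ : ∃ x, Ψ x ≠ ⊥)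
    (hfin : ((⨅ x, (f x - Ψ x)) ≠ ⊤ ∧ (⨅ x, (f x - Ψ x)) ≠ ⊥) ∨
      ((⨆ p, (concaveConj Ψ p - convexConj f p)) ≠ ⊤ ∧
        (⨆ p, (concaveConj Ψ p - convexConj f p)) ≠ ⊥)) :
    (⨅ x, (f x - Ψ x)) = (⨆ p, (concaveConj Ψ p - convexConj f p)) ∧
      (∃ x, f x - Ψ x = ⨅ x, (f x - Ψ x)) ∧
      ∃ p, concaveConj Ψ p - convexConj f p = ⨆ p, (concaveConj Ψ p - convexConj f p) := by
  choose D φ hφ hψ using fun i =>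
    exists_discreteConvexOn_eq_neg_extendTop (hψZ i) (hψint i) (hψconc i)
  have hfF := eq_extendTop hfZ
  have hΨφ : Ψ = -extendTop (Set.univ.pi D) fun x => ∑ i, φ i (x i) := by
    funext x
    rw [hΨ, ← sum_neg_extendTop]
    simp only [hψ]
  have hne : (Set.univ.pi D).Nonempty := by
    obtain ⟨x, hx⟩ := hdomΨ
    refine ⟨x, by_contra fun hxD => hx ?_⟩
    rw [hΨφ, Pi.neg_apply, extendTop_of_notMem hxD, EReal.neg_top]
  rcases ({x | f x ≠ ⊤} ∩ Set.univ.pi D).eq_empty_or_nonempty with hempty | hfeas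
  · have hprimal : (⨅ x, (f x - Ψ x)) = ⊤ := iInf_eq_top.2 fun x => by
      rw [hΨφ, Pi.neg_apply, sub_eq_add_neg, neg_neg, hfF, extendTop_add_extendTop,
        extendTop_of_notMem (hempty ▸ Set.notMem_empty x)]
    have hdual := hf.iSup_dual_eq_top_of_disjoint hdomf (fun i => (hφ i).ordConnected) hne hfF hΨφ
      (Set.disjoint_iff_inter_eq_empty.2 hempty)
    exact (hfin.elim (·.1 hprimal) fun h => h.1 (hdual h.2)).elim
  · have hbdd : (⨅ x, (f x - Ψ x)) ≠ ⊥ := hfin.elim (·.2) fun h =>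
      ne_bot_of_le_ne_bot h.2 (iSup_dual_le_iInf_primal f Ψ)
    obtain ⟨c, p, hle⟩ := hf.exists_primal_le_dual hφ hfF hΨφ hfeas hbdd
    exact fenchel_duality_of_le hle

/-- **Fenchel duality for a pair of an integer-valued integrally convex
function and an integer-valued separable concave function** (main result,
Theorem 1.1).  min{f(x) − Ψ(x)} = max{Ψ°(p) − f•(p)}, provided one of the
two sides is finite; moreover both optima are attained. -/
theorem fenchel_duality_integrally_convex_separable_concave (n : ℕ)
    (f : (Fin n → ℤ) → EReal)
    (hfZ : ∀ z, f z = ⊤ ∨ ∃ m : ℤ, f z = ((m : ℝ) : EReal))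
    (hf : IntegrallyConvexFn f)
    (ψ : Fin n → ℤ → EReal)
    (hψZ : ∀ i k, ψ i k = ⊥ ∨ ∃ m : ℤ, ψ i k = ((m : ℝ) : EReal))
    (hψint : ∀ i (k l m : ℤ), k ≤ l → l ≤ m → ψ i k ≠ ⊥ → ψ i m ≠ ⊥ → ψ i l ≠ ⊥)
    (hψconc : ∀ i (k : ℤ), ψ i (k - 1) + ψ i (k + 1) ≤ (2 : EReal) * ψ i k)
    (hdom : ∃ x : Fin n → ℤ, (∑ i, ψ i (x i)) ≠ ⊥)
    (hfin :
      ((⨅ x : Fin n → ℤ, (f x - ∑ i, ψ i (x i))) ≠ ⊤ ∧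
        (⨅ x : Fin n → ℤ, (f x - ∑ i, ψ i (x i))) ≠ ⊥) ∨
      ((⨆ p : Fin n → ℤ,
          ((⨅ x : Fin n → ℤ, ((((∑ i, p i * x i : ℤ) : ℝ) : EReal) - ∑ i, ψ i (x i))) -
           (⨆ x : Fin n → ℤ, ((((∑ i, p i * x i : ℤ) : ℝ) : EReal) - f x)))) ≠ ⊤ ∧
       (⨆ p : Fin n → ℤ,
          ((⨅ x : Fin n → ℤ, ((((∑ i, p i * x i : ℤ) : ℝ) : EReal) - ∑ i, ψ i (x i))) -
           (⨆ x : Fin n → ℤ, ((((∑ i, p i * x i : ℤ) : ℝ) : EReal) - f x)))) ≠ ⊥)) :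
    (⨅ x : Fin n → ℤ, (f x - ∑ i, ψ i (x i))) =
      (⨆ p : Fin n → ℤ,
        ((⨅ x : Fin n → ℤ, ((((∑ i, p i * x i : ℤ) : ℝ) : EReal) - ∑ i, ψ i (x i))) -
         (⨆ x : Fin n → ℤ, ((((∑ i, p i * x i : ℤ) : ℝ) : EReal) - f x)))) ∧
    (∃ xs : Fin n → ℤ,
      f xs - (∑ i, ψ i (xs i)) = ⨅ x : Fin n → ℤ, (f x - ∑ i, ψ i (x i))) ∧
    (∃ ps : Fin n → ℤ,
      ((⨅ x : Fin n → ℤ, ((((∑ i, ps i * x i : ℤ) : ℝ) : EReal) - ∑ i, ψ i (x i))) -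
       (⨆ x : Fin n → ℤ, ((((∑ i, ps i * x i : ℤ) : ℝ) : EReal) - f x))) =
      (⨆ p : Fin n → ℤ,
        ((⨅ x : Fin n → ℤ, ((((∑ i, p i * x i : ℤ) : ℝ) : EReal) - ∑ i, ψ i (x i))) -
         (⨆ x : Fin n → ℤ, ((((∑ i, p i * x i : ℤ) : ℝ) : EReal) - f x))))) :=
  fenchel_duality_integrally_convex_separable_concave_general f hfZ hf.1
    (hf.midpointConvexOn_floor_toReal hfZ) ψ hψZ hψint hψconc rfl hdom hfin
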